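/- For every deterministic very visibly push-down automaton M with Σ_ret ≠ ∅, the following are equivalent: (i) M has a synchronizing word in the empty stack model; (ii) M has a synchronizing word in the same stack model; (iii) M has a synchronizing word in the arbitrary stack model. -/

import Mathlib

/-- Letters of a visibly pushdown alphabet: call letters (pushing one stack symbol),
internal letters (leaving the stack unchanged), and return letters (popping). -/
inductive VLetter (C I R : Type) : Type
  | call : C → VLetter C I R
  | int  : I → VLetter C I R
  | ret  : R → VLetter C I R

/-- A deterministic visibly push-down automaton over state type `Q`, call letters `C`,
internal letters `I`, return letters `R`, and stack alphabet `Γ` (the symbols other than the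
bottom symbol `⊥`).  A stack is a `List Γ` of the symbols above `⊥`, top at the head; the
bottom symbol `⊥` is implicit.  A return transition receives `none` when `⊥` is the topmost
symbol (it is read but not popped), and `some γ` when `γ ∈ Γ` is on top (which is popped). -/
structure DVPDA (Q C I R Γ : Type) : Type where
  δc : Q → C → Q × Γ
  δi : Q → I → Q
  δr : Q → R → Option Γ → Q

namespace DVPDA

variable {Q C I R Γ : Type}

/-- One step of a DVPDA on a configuration `(q, υ)`. -/
def step (M : DVPDA Q C I R Γ) : Q × List Γ → VLetter C I R → Q × List Γ
  | (q, s), .call c => ((M.δc q c).1, (M.δc q c).2 :: s)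
  | (q, s), .int i  => (M.δi q i, s)
  | (q, []), .ret ρ => (M.δr q ρ none, [])
  | (q, γ :: s), .ret ρ => (M.δr q ρ (some γ), s)

/-- The run of a DVPDA on a word: `(q, υ) →^w M.run (q, υ) w`. -/
def run (M : DVPDA Q C I R Γ) (cfg : Q × List Γ) (w : List (VLetter C I R)) : Q × List Γ :=
  w.foldl M.step cfg

/-- `w` synchronizes `M` in the empty stack model: all runs from `(q, ⊥)` end in the same
state with empty stack. -/
def SyncEmpty (M : DVPDA Q C I R Γ) (w : List (VLetter C I R)) : Prop :=
  ∃ qbar : Q, ∀ q : Q, M.run (q, []) w = (qbar, [])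

/-- `w` synchronizes `M` in the same stack model: all runs from `(q, ⊥)` end in the same
state with the same stack content. -/
def SyncSame (M : DVPDA Q C I R Γ) (w : List (VLetter C I R)) : Prop :=
  ∃ (qbar : Q) (υ : List Γ), ∀ q : Q, M.run (q, []) w = (qbar, υ)

/-- `w` synchronizes `M` in the arbitrary stack model: all runs from `(q, ⊥)` end in the same
state, with arbitrary stack contents. -/
def SyncArb (M : DVPDA Q C I R Γ) (w : List (VLetter C I R)) : Prop :=
  ∃ qbar : Q, ∀ q : Q, (M.run (q, []) w).1 = qbar

end DVPDA

/-!
In a very visibly push-down automaton the stack evolves independently of the state, so the runs on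
a common word from the empty stack always end with a common stack. A common stack can be emptied
by reading one fixed return letter as often as the stack is high; since the state and the stack
already agree, this keeps the runs synchronized.
-/

namespace DVPDA

variable {Q C I R Γ : Type} {M : DVPDA Q C I R Γ} {w : List (VLetter C I R)}

/-- `M` is very visibly: the stack symbol pushed on a call letter depends on that letter only, not
on the current state. -/
def IsVeryVisibly (M : DVPDA Q C I R Γ) : Prop :=
  ∀ (σ : C) (p q : Q), (M.δc p σ).2 = (M.δc q σ).2

theorem run_append (M : DVPDA Q C I R Γ) (cfg : Q × List Γ) (u v : List (VLetter C I R)) :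
    M.run cfg (u ++ v) = M.run (M.run cfg u) v :=
  List.foldl_append

theorem step_ret_snd (M : DVPDA Q C I R Γ) (cfg : Q × List Γ) (ρ : R) :
    (M.step cfg (.ret ρ)).2 = cfg.2.tail := by
  rcases cfg with ⟨q, _ | ⟨γ, s⟩⟩ <;> rfl

theorem run_replicate_ret_snd (M : DVPDA Q C I R Γ) (cfg : Q × List Γ) (ρ : R) (n : ℕ) :
    (M.run cfg (List.replicate n (.ret ρ))).2 = cfg.2.drop n := by
  induction n generalizing cfg with
  | zero => rfl
  | succ n ih =>
    calc (M.run cfg (List.replicate (n + 1) (.ret ρ))).2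
        = (M.run (M.step cfg (.ret ρ)) (List.replicate n (.ret ρ))).2 := rfl
      _ = cfg.2.tail.drop n := by rw [ih, step_ret_snd]
      _ = cfg.2.drop (n + 1) := List.drop_tail

theorem IsVeryVisibly.step_snd_eq (hM : M.IsVeryVisibly) {c d : Q × List Γ} (h : c.2 = d.2)
    (a : VLetter C I R) : (M.step c a).2 = (M.step d a).2 := by
  obtain ⟨p, s⟩ := c
  obtain ⟨q, t⟩ := d
  obtain rfl : s = t := h
  cases a with
  | call σ => exact congrArg (· :: s) (hM σ p q)
  | int i => rfl
  | ret ρ => rw [step_ret_snd, step_ret_snd]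

theorem IsVeryVisibly.run_snd_eq (hM : M.IsVeryVisibly) {c d : Q × List Γ} (h : c.2 = d.2)
    (w : List (VLetter C I R)) : (M.run c w).2 = (M.run d w).2 := by
  induction w generalizing c d with
  | nil => exact h
  | cons a _ ih => exact ih (hM.step_snd_eq h a)

theorem SyncEmpty.syncSame : M.SyncEmpty w → M.SyncSame w
  | ⟨qbar, h⟩ => ⟨qbar, [], h⟩

theorem SyncSame.syncArb : M.SyncSame w → M.SyncArb w
  | ⟨qbar, _, h⟩ => ⟨qbar, fun q => congrArg Prod.fst (h q)⟩

theorem SyncSame.exists_syncEmpty_append_replicate_ret (hw : M.SyncSame w) (ρ : R) :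
    ∃ n : ℕ, M.SyncEmpty (w ++ List.replicate n (.ret ρ)) := by
  obtain ⟨qbar, υ, h⟩ := hw
  refine ⟨υ.length, (M.run (qbar, υ) (List.replicate υ.length (.ret ρ))).1, fun q => ?_⟩
  rw [run_append, h]
  exact Prod.ext rfl ((M.run_replicate_ret_snd _ ρ _).trans List.drop_length)

theorem exists_syncEmpty_iff_exists_syncSame [Nonempty R] (M : DVPDA Q C I R Γ) :
    (∃ w, M.SyncEmpty w) ↔ ∃ w, M.SyncSame w := by
  refine ⟨fun ⟨w, hw⟩ => ⟨w, hw.syncSame⟩, fun ⟨w, hw⟩ => ?_⟩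
  obtain ⟨ρ⟩ := ‹Nonempty R›
  obtain ⟨n, hn⟩ := hw.exists_syncEmpty_append_replicate_ret ρ
  exact ⟨_, hn⟩

theorem IsVeryVisibly.syncSame_iff_syncArb (hM : M.IsVeryVisibly) :
    M.SyncSame w ↔ M.SyncArb w :=
  ⟨SyncSame.syncArb, fun ⟨qbar, h⟩ => ⟨qbar, (M.run (qbar, []) w).2, fun q =>
    Prod.ext (h q) (hM.run_snd_eq (c := (q, [])) (d := (qbar, [])) rfl w)⟩⟩

end DVPDA

theorem dvvpda_ret_sync_models_equivalent_general
    {Q C I R Γ : Type} [Nonempty R] (M : DVPDA Q C I R Γ) (hM : M.IsVeryVisibly) :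
    ((∃ w : List (VLetter C I R), M.SyncEmpty w) ↔
      (∃ w : List (VLetter C I R), M.SyncSame w)) ∧
    ((∃ w : List (VLetter C I R), M.SyncSame w) ↔
      (∃ w : List (VLetter C I R), M.SyncArb w)) :=
  ⟨M.exists_syncEmpty_iff_exists_syncSame, exists_congr fun _ => hM.syncSame_iff_syncArb⟩

/-- For every deterministic very visibly push-down automaton `M` with
`Σ_ret ≠ ∅`, the following are equivalent: `M` has a synchronizing word in the empty stack
model; in the same stack model; in the arbitrary stack model. -/
theorem dvvpda_ret_sync_models_equivalent
    {Q C I R Γ : Type} [Fintype Q] [Nonempty R] (M : DVPDA Q C I R Γ)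
    (hvv : ∀ (σ : C) (p q : Q), (M.δc p σ).2 = (M.δc q σ).2) :
    ((∃ w : List (VLetter C I R), M.SyncEmpty w) ↔
      (∃ w : List (VLetter C I R), M.SyncSame w)) ∧
    ((∃ w : List (VLetter C I R), M.SyncSame w) ↔
      (∃ w : List (VLetter C I R), M.SyncArb w)) :=
  dvvpda_ret_sync_models_equivalent_general M hvv
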